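/- Let n ≥ 2, m > 1 and δ > 1/2. There exists a constant C > 0 such that for every Schwartz function φ on ℝⁿ, ‖⟨x⟩^{-δ} |D_x|^{(m-1)/2} e^{itp(D_x)} φ‖_{L²(ℝ^{1+n}_{t,x})} ≤ C ‖φ‖_{L²(ℝⁿ)}. -/

import Mathlib

open MeasureTheory Real Complex RealInnerProductSpace

noncomputable section

/-- Fourier transform with convention `(2π)^(-n/2) ∫ e^(-ix·ξ) f(x) dx`. -/
def FT (n : ℕ) (f : EuclideanSpace ℝ (Fin n) → ℂ) (ξ : EuclideanSpace ℝ (Fin n)) : ℂ :=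
  ((2 * π) ^ (-(n : ℝ) / 2) : ℝ) •
    ∫ x : EuclideanSpace ℝ (Fin n), Complex.exp (-Complex.I * ((⟪x, ξ⟫ : ℝ) : ℂ)) * f x

/-- Inverse Fourier transform. -/
def IFT (n : ℕ) (F : EuclideanSpace ℝ (Fin n) → ℂ) (x : EuclideanSpace ℝ (Fin n)) : ℂ :=
  ((2 * π) ^ (-(n : ℝ) / 2) : ℝ) •
    ∫ ξ : EuclideanSpace ℝ (Fin n), Complex.exp (Complex.I * ((⟪x, ξ⟫ : ℝ) : ℂ)) * F ξ

/-- Fourier multiplier with symbol `q`: `q(D_x) f = IFT (q · FT f)`. -/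
def mult (n : ℕ) (q : EuclideanSpace ℝ (Fin n) → ℂ) (f : EuclideanSpace ℝ (Fin n) → ℂ) :
    EuclideanSpace ℝ (Fin n) → ℂ :=
  IFT n fun ξ => q ξ * FT n f ξ

/-!
Near a frequency `ξ₀ ≠ 0` the derivative of `p` along some unit vector `v` is positive, and by
homogeneity it is comparable to `|ξ| ^ (m - 1)` on an open convex cone around `ξ₀`. There `p ξ` can
replace `⟪v, ξ⟫` as a frequency variable. Since `t` is dual to `p ξ`, exchanging the roles of `t`
and `⟪v, x⟫` turns the space-time estimate, for each fixed value of `⟪v, x⟫`, into Plancherel's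
identity; the Jacobian `(∂_v p)⁻¹` is what pays for the factor `|ξ| ^ (m - 1)`. The remaining
integral over `⟪v, x⟫` converges because `⟨x⟩ ^ (-2δ) ≤ ⟨⟪v, x⟫⟩ ^ (-2δ)` and `2δ > 1`. By
compactness of the sphere finitely many such cones cover all nonzero frequencies.
-/

section Haar

open scoped ENNReal

variable {E : Type*} [NormedAddCommGroup E] [NormedSpace ℝ E] [FiniteDimensional ℝ E]
  [MeasurableSpace E] [BorelSpace E] (μ : Measure E) [μ.IsAddHaarMeasure]

theorem lintegral_comp_smul_eq (f : E → ℝ≥0∞) {R : ℝ} (hR : R ≠ 0) :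
    ∫⁻ x, f (R • x) ∂μ = ENNReal.ofReal |(R ^ Module.finrank ℝ E)⁻¹| * ∫⁻ x, f x ∂μ := by
  have hemb : MeasurableEmbedding fun x : E => R • x :=
    (Homeomorph.smulOfNeZero R hR).measurableEmbedding
  rw [← hemb.lintegral_map, Measure.map_addHaar_smul μ hR, lintegral_smul_measure, smul_eq_mul]

theorem exists_integrableOn_image_abs_det_smul_eq {S : Set E} {Φ : E → E} {Φ' : E → E →L[ℝ] E}
    (hS : MeasurableSet S)
    (hΦ : ∀ ξ ∈ S, HasFDerivWithinAt Φ (Φ' ξ) S ξ) (hinj : Set.InjOn Φ S)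
    (hdet : ∀ ξ ∈ S, (Φ' ξ).det ≠ 0) {G : E → ℂ} (hG : IntegrableOn G S μ) :
    ∃ H : E → ℂ, IntegrableOn H (Φ '' S) μ ∧ ∀ ξ ∈ S, |(Φ' ξ).det| • H (Φ ξ) = G ξ := by
  let Ψ := Function.invFunOn Φ S
  have hΨ : ∀ ξ ∈ S, Ψ (Φ ξ) = ξ := fun ξ hξ => hinj.leftInvOn_invFunOn hξ
  let H : E → ℂ := fun η => |(Φ' (Ψ η)).det|⁻¹ • G (Ψ η)
  have hH : ∀ ξ ∈ S, |(Φ' ξ).det| • H (Φ ξ) = G ξ := fun ξ hξ => by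
    simp only [H, hΨ ξ hξ, smul_inv_smul₀ (abs_ne_zero.2 (hdet ξ hξ))]
  refine ⟨H, ?_, hH⟩
  rw [integrableOn_image_iff_integrableOn_abs_det_fderiv_smul μ hS hΦ hinj]
  exact hG.congr_fun (fun ξ hξ => (hH ξ hξ).symm) hS

end Haar

section Plancherel

open FourierTransform
open scoped ENNReal SchwartzMap ContDiff

variable {E : Type*} [NormedAddCommGroup E] [InnerProductSpace ℝ E] [FiniteDimensional ℝ E]
  [MeasurableSpace E] [BorelSpace E]

theorem integral_schwartzMap_smul_fourier (ψ : 𝓢(E, ℂ)) {f : E → ℂ} (hf : Integrable f) :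
    ∫ x, ψ x • 𝓕 f x = ∫ x, 𝓕 (ψ : E → ℂ) x • f x := by
  have h := VectorFourier.integral_fourierIntegral_smul_eq_flip (L := innerₗ E) (μ := volume)
    (ν := volume) Real.continuous_fourierChar continuous_inner ψ.integrable hf
  rw [flip_innerₗ] at h
  exact h.symm

theorem integral_schwartzMap_smul_fourier_Lp (ψ : 𝓢(E, ℂ)) (f : Lp (α := E) ℂ 2) :
    ∫ x, ψ x • (𝓕 f : Lp (α := E) ℂ 2) x = ∫ x, 𝓕 (ψ : E → ℂ) x • f x := by
  simpa only [TemperedDistribution.fourier_apply, SchwartzMap.fourier_coe,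
    Lp.toTemperedDistribution_apply] using
    (congrArg (fun T => T ψ) (Lp.fourier_toTemperedDistribution_eq f)).symm

-- Both sides pair in the same way with test functions.
theorem fourier_ae_eq_fourier_toLp {f : E → ℂ} (hf : Integrable f) (hf₂ : MemLp f 2) :
    𝓕 f =ᵐ[volume] (𝓕 (hf₂.toLp f) : Lp (α := E) ℂ 2) := by
  have hcont : Continuous (𝓕 f) := VectorFourier.fourierIntegral_continuous
    Real.continuous_fourierChar continuous_inner hf
  refine ae_eq_of_integral_contDiff_smul_eq hcont.locallyIntegrable
    ((Lp.memLp (𝓕 (hf₂.toLp f))).locallyIntegrable one_le_two) fun g hg hgc => ?_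
  let ψ : 𝓢(E, ℂ) := (hgc.comp_left (g := Complex.ofRealCLM) (map_zero _)).toSchwartzMap
    (Complex.ofRealCLM.contDiff.comp hg)
  have hψ (h : E → ℂ) : ∫ x, g x • h x = ∫ x, ψ x • h x :=
    integral_congr_ae (.of_forall fun x => (Complex.coe_smul (g x) (h x)).symm)
  rw [hψ, hψ, integral_schwartzMap_smul_fourier ψ hf, integral_schwartzMap_smul_fourier_Lp]
  refine integral_congr_ae ?_
  filter_upwards [hf₂.coeFn_toLp] with x hx
  rw [hx]

theorem eLpNorm_fourier_eq {f : E → ℂ} (hf : Integrable f) (hf₂ : MemLp f 2) :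
    eLpNorm (𝓕 f) 2 = eLpNorm f 2 := by
  rw [eLpNorm_congr_ae (fourier_ae_eq_fourier_toLp hf hf₂), ← eLpNorm_congr_ae hf₂.coeFn_toLp,
    ← Lp.enorm_def, ← Lp.enorm_def, ← ofReal_norm, ← ofReal_norm, Lp.norm_fourier_eq]

theorem lintegral_enorm_sq_eq_eLpNorm_sq {α : Type*} [MeasurableSpace α] (μ : Measure α)
    {F : Type*} [NormedAddCommGroup F] (f : α → F) :
    ∫⁻ x, ‖f x‖ₑ ^ 2 ∂μ = eLpNorm f 2 μ ^ 2 := by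
  simpa using (eLpNorm_nnreal_pow_eq_lintegral (f := f) (μ := μ) (p := 2) two_ne_zero).symm

theorem lintegral_enorm_sq_fourier_le {f : E → ℂ} (hf : Integrable f) :
    ∫⁻ x, ‖𝓕 f x‖ₑ ^ 2 ≤ ∫⁻ x, ‖f x‖ₑ ^ 2 := by
  simp only [lintegral_enorm_sq_eq_eLpNorm_sq]
  by_cases hf₂ : eLpNorm f 2 = ⊤
  · simp [hf₂]
  · rw [eLpNorm_fourier_eq hf ⟨hf.1, lt_top_iff_ne_top.2 hf₂⟩]

theorem integral_exp_inner_mul_eq_fourier (f : E → ℂ) (y : E) :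
    ∫ η, Complex.exp (Complex.I * (⟪y, η⟫ : ℝ)) * f η = 𝓕 f (-(2 * π)⁻¹ • y) := by
  rw [Real.fourier_eq']
  refine integral_congr_ae (.of_forall fun η => ?_)
  simp only [inner_smul_right, smul_eq_mul, real_inner_comm]
  congr 2
  push_cast
  field_simp

theorem lintegral_enorm_sq_integral_exp_inner_le {f : E → ℂ} (hf : Integrable f) :
    ∫⁻ y : E, ‖∫ η, Complex.exp (Complex.I * (⟪y, η⟫ : ℝ)) * f η‖ₑ ^ 2
      ≤ ENNReal.ofReal ((2 * π) ^ Module.finrank ℝ E) * ∫⁻ η, ‖f η‖ₑ ^ 2 := by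
  simp_rw [integral_exp_inner_mul_eq_fourier]
  rw [lintegral_comp_smul_eq volume (fun η => ‖𝓕 f η‖ₑ ^ 2) (by simp [pi_ne_zero])]
  have hconst : |((-(2 * π)⁻¹) ^ Module.finrank ℝ E)⁻¹| = (2 * π) ^ Module.finrank ℝ E := by
    rw [abs_inv, abs_pow, abs_neg, abs_inv, inv_pow, inv_inv, abs_of_pos two_pi_pos]
  rw [hconst]
  exact mul_le_mul_right (lintegral_enorm_sq_fourier_le hf) _

theorem lintegral_enorm_sq_setIntegral_exp_inner_le {S : Set E} (hS : MeasurableSet S)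
    {f : E → ℂ} (hf : IntegrableOn f S) :
    ∫⁻ y : E, ‖∫ η in S, Complex.exp (Complex.I * (⟪y, η⟫ : ℝ)) * f η‖ₑ ^ 2
      ≤ ENNReal.ofReal ((2 * π) ^ Module.finrank ℝ E) * ∫⁻ η in S, ‖f η‖ₑ ^ 2 := by
  have h := lintegral_enorm_sq_integral_exp_inner_le (hf.integrable_indicator hS)
  have hsq : ∀ η, ‖S.indicator f η‖ₑ ^ 2 = S.indicator (fun η => ‖f η‖ₑ ^ 2) η := fun η => by
    by_cases hη : η ∈ S <;> simp [hη]
  have hmul : ∀ y η, Complex.exp (Complex.I * (⟪y, η⟫ : ℝ)) * S.indicator f η =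
      S.indicator (fun η => Complex.exp (Complex.I * (⟪y, η⟫ : ℝ)) * f η) η := fun y η =>
    (Set.indicator_mul_right S (fun η => Complex.exp (Complex.I * (⟪y, η⟫ : ℝ))) f).symm
  simpa only [hsq, hmul, lintegral_indicator hS, integral_indicator hS] using h

end Plancherel

section ChangeOfVariables

variable {E : Type*} [NormedAddCommGroup E] [InnerProductSpace ℝ E] [FiniteDimensional ℝ E]
  [MeasurableSpace E] [BorelSpace E] {S : Set E} {Φ : E → E} {Φ' : E → E →L[ℝ] E}

theorem lintegral_enorm_sq_setIntegral_exp_inner_comp_le (hS : MeasurableSet S)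
    (hΦ : ∀ ξ ∈ S, HasFDerivWithinAt Φ (Φ' ξ) S ξ) (hinj : Set.InjOn Φ S)
    (hdet : ∀ ξ ∈ S, (Φ' ξ).det ≠ 0) {G : E → ℂ} (hG : IntegrableOn G S) :
    ∫⁻ y : E, ‖∫ ξ in S, Complex.exp (Complex.I * (⟪y, Φ ξ⟫ : ℝ)) * G ξ‖ₑ ^ 2
      ≤ ENNReal.ofReal ((2 * π) ^ Module.finrank ℝ E) *
        ∫⁻ ξ in S, ENNReal.ofReal |(Φ' ξ).det|⁻¹ * ‖G ξ‖ₑ ^ 2 := by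
  obtain ⟨H, hH, hHG⟩ := exists_integrableOn_image_abs_det_smul_eq volume hS hΦ hinj hdet hG
  have hleft (y : E) : ∫ ξ in S, Complex.exp (Complex.I * (⟪y, Φ ξ⟫ : ℝ)) * G ξ =
      ∫ η in Φ '' S, Complex.exp (Complex.I * (⟪y, η⟫ : ℝ)) * H η := by
    rw [integral_image_eq_integral_abs_det_fderiv_smul _ hS hΦ hinj]
    refine setIntegral_congr_fun hS fun ξ hξ => ?_
    rw [← mul_smul_comm, hHG ξ hξ]
  have hright : ∫⁻ ξ in S, ENNReal.ofReal |(Φ' ξ).det|⁻¹ * ‖G ξ‖ₑ ^ 2 =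
      ∫⁻ η in Φ '' S, ‖H η‖ₑ ^ 2 := by
    rw [lintegral_image_eq_lintegral_abs_det_fderiv_mul _ hS hΦ hinj]
    refine setLIntegral_congr_fun hS fun ξ hξ => ?_
    have hJ : 0 < |(Φ' ξ).det| := abs_pos.2 (hdet ξ hξ)
    simp only [← hHG ξ hξ, enorm_smul, Real.enorm_of_nonneg hJ.le]
    rw [mul_pow, sq (ENNReal.ofReal _), mul_assoc, ← mul_assoc,
      ← ENNReal.ofReal_mul (by positivity), inv_mul_cancel₀ hJ.ne', ENNReal.ofReal_one, one_mul]
  simp_rw [hleft, hright]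
  exact lintegral_enorm_sq_setIntegral_exp_inner_le
    (measurable_image_of_fderivWithin hS hΦ hinj) hH

end ChangeOfVariables

section Straighten

theorem det_id_add_smulRight {E : Type*} [NormedAddCommGroup E] [NormedSpace ℝ E]
    [FiniteDimensional ℝ E] (f : E →L[ℝ] ℝ) (v : E) :
    (ContinuousLinearMap.id ℝ E + f.smulRight v).det = 1 + f v :=
  LinearMap.transvection.det f.toLinearMap v

variable {E : Type*} [NormedAddCommGroup E] [InnerProductSpace ℝ E]

/-- The change of frequency variables which replaces the component of `ξ` along the unit vector
`v` by the symbol value `p ξ`. -/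
def straighten (v : E) (p : E → ℝ) (ξ : E) : E := ξ + (p ξ - ⟪v, ξ⟫) • v

/-- The change of space-time variables which exchanges the time `t` with the component of `x`
along the unit vector `v`; it is dual to `straighten v p`. -/
def exchange (v : E) (q : ℝ × E) : ℝ × E := (⟪v, q.2⟫, q.2 + (q.1 - ⟪v, q.2⟫) • v)

variable {v : E} {p : E → ℝ} {p' : E → E →L[ℝ] ℝ} {S : Set E}

theorem hasFDerivAt_straighten {L : E →L[ℝ] ℝ} {ξ : E} (hp : HasFDerivAt p L ξ) :
    HasFDerivAt (straighten v p)
      (ContinuousLinearMap.id ℝ E + (L - innerSL ℝ v).smulRight v) ξ :=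
  (hasFDerivAt_id ξ).add ((hp.sub (innerSL ℝ v).hasFDerivAt).smul_const v)

theorem injOn_straighten (hv : ‖v‖ = 1) (hS : Convex ℝ S)
    (hp : ∀ ξ ∈ S, HasFDerivAt p (p' ξ) ξ) (hpv : ∀ ξ ∈ S, p' ξ v ≠ 0) :
    Set.InjOn (straighten v p) S := by
  intro ξ hξ η hη heq
  have hpeq : p η = p ξ := by
    simpa [straighten, inner_add_right, real_inner_smul_right, hv] using
      congrArg (⟪v, ·⟫) heq.symm
  have hdir : η - ξ = (⟪v, η⟫ - ⟪v, ξ⟫) • v := by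
    simp only [straighten, hpeq] at heq
    linear_combination (norm := module) -heq
  obtain ⟨ζ, hζ, hmvt⟩ := domain_mvt (fun ζ hζ => (hp ζ hζ).hasFDerivWithinAt) hS hξ hη
  rw [hdir, map_smul, hpeq, sub_self, smul_eq_mul, zero_eq_mul] at hmvt
  rw [hmvt.resolve_right (hpv ζ (hS.segment_subset hξ hη hζ)), zero_smul] at hdir
  exact (sub_eq_zero.1 hdir).symm

theorem inner_exchange_snd (hv : ‖v‖ = 1) (q : ℝ × E) : ⟪v, (exchange v q).2⟫ = q.1 := by
  simp [exchange, inner_add_right, real_inner_smul_right, hv]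

theorem inner_exchange_add_mul (v : E) (p : E → ℝ) (q : ℝ × E) (ξ : E) :
    ⟪(exchange v q).2, ξ⟫ + (exchange v q).1 * p ξ =
      ⟪q.2, straighten v p ξ⟫ + q.1 * ⟪v, ξ⟫ := by
  simp only [exchange, straighten, inner_add_left, inner_add_right, real_inner_smul_left,
    real_inner_smul_right, real_inner_comm v q.2]
  ring

variable [FiniteDimensional ℝ E] [MeasurableSpace E] [BorelSpace E]

theorem measurePreserving_exchange (hv : ‖v‖ = 1) :
    MeasurePreserving (exchange v) (volume : Measure (ℝ × E)) volume := by
  -- In the plane of `t` and `⟪v, x⟫`, the swap factors into three shears and a sign change.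
  have hshear : MeasurePreserving (fun q : ℝ × E => (q.1, q.2 + q.1 • v)) volume volume :=
    (MeasurePreserving.id volume).skew_product (g := fun (t : ℝ) (x : E) => x + t • v)
      (by unfold Function.uncurry; fun_prop)
      (.of_forall fun t => map_add_right_eq_self volume (t • v))
  have hshear_swap : MeasurePreserving (fun q : E × ℝ => (q.1, q.2 - ⟪v, q.1⟫)) volume volume :=
    (MeasurePreserving.id volume).skew_product (g := fun (x : E) (t : ℝ) => t - ⟪v, x⟫)
      (by unfold Function.uncurry; fun_prop)
      (.of_forall fun x => map_sub_right_eq_self volume ⟪v, x⟫)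
  have hshear' : MeasurePreserving (fun q : ℝ × E => (q.1 - ⟪v, q.2⟫, q.2)) volume volume :=
    Measure.measurePreserving_swap.comp (hshear_swap.comp Measure.measurePreserving_swap)
  have hneg : MeasurePreserving (fun q : ℝ × E => (-q.1, q.2)) volume volume :=
    (Measure.measurePreserving_neg volume).prod (MeasurePreserving.id volume)
  convert hneg.comp (hshear.comp (hshear'.comp hshear)) using 1
  funext q
  refine Prod.ext ?_ ?_
  · simp [exchange, inner_add_right, real_inner_smul_right, hv]
  · simp only [exchange, Function.comp_apply, inner_add_right, real_inner_smul_right,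
      real_inner_self_eq_norm_sq, hv]
    module

theorem lintegral_enorm_sq_setIntegral_exp_inner_straighten_le (hv : ‖v‖ = 1)
    (hS : MeasurableSet S) (hS' : Convex ℝ S) (hp : ∀ ξ ∈ S, HasFDerivAt p (p' ξ) ξ)
    (hpv : ∀ ξ ∈ S, 0 < p' ξ v) {G : E → ℂ} (hG : IntegrableOn G S) :
    ∫⁻ y : E, ‖∫ ξ in S, Complex.exp (Complex.I * (⟪y, straighten v p ξ⟫ : ℝ)) * G ξ‖ₑ ^ 2
      ≤ ENNReal.ofReal ((2 * π) ^ Module.finrank ℝ E) *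
        ∫⁻ ξ in S, ENNReal.ofReal (p' ξ v)⁻¹ * ‖G ξ‖ₑ ^ 2 := by
  have hdet (ξ : E) : (ContinuousLinearMap.id ℝ E + (p' ξ - innerSL ℝ v).smulRight v).det =
      p' ξ v := by
    rw [det_id_add_smulRight]
    simp [hv]
  refine (lintegral_enorm_sq_setIntegral_exp_inner_comp_le hS
    (fun ξ hξ => (hasFDerivAt_straighten (hp ξ hξ)).hasFDerivWithinAt)
    (injOn_straighten hv hS' hp fun ξ hξ => (hpv ξ hξ).ne')
    (fun ξ hξ => (hdet ξ).trans_ne (hpv ξ hξ).ne') hG).trans_eq ?_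
  congr 1
  refine setLIntegral_congr_fun hS fun ξ hξ => ?_
  simp only [hdet, abs_of_pos (hpv ξ hξ)]

end Straighten

section DispersiveIntegral

open scoped ENNReal

theorem integrable_exp_I_mul {α : Type*} [MeasurableSpace α] {μ : Measure α} {f : α → ℝ}
    (hf : AEMeasurable f μ) {G : α → ℂ} (hG : Integrable G μ) :
    Integrable (fun ξ => Complex.exp (Complex.I * (f ξ : ℂ)) * G ξ) μ := by
  have hexp : AEMeasurable (fun ξ => Complex.exp (Complex.I * (f ξ : ℂ))) μ := by fun_prop
  exact hG.bdd_mul hexp.aestronglyMeasurable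
    (.of_forall fun ξ => (Complex.norm_exp_I_mul_ofReal (f ξ)).le)

theorem enorm_add_sq_le {F : Type*} [NormedAddCommGroup F] (z w : F) :
    ‖z + w‖ₑ ^ 2 ≤ 2 * (‖z‖ₑ ^ 2 + ‖w‖ₑ ^ 2) := by
  calc ‖z + w‖ₑ ^ 2 ≤ (‖z‖ₑ + ‖w‖ₑ) ^ 2 := by gcongr; exact enorm_add_le z w
    _ ≤ 2 * (‖z‖ₑ ^ 2 + ‖w‖ₑ ^ 2) := by
      have h := ENNReal.rpow_add_le_mul_rpow_add_rpow ‖z‖ₑ ‖w‖ₑ one_le_two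
      norm_num at h
      exact h

variable {E : Type*} [NormedAddCommGroup E] [InnerProductSpace ℝ E] [FiniteDimensional ℝ E]
  [MeasurableSpace E] [BorelSpace E]

/-- The superposition of the plane waves `(t, x) ↦ exp (i (⟪x, ξ⟫ + t p(ξ)))` with density `G`:
up to normalization, the solution of `∂ₜu = i p(Dₓ) u` whose initial datum has Fourier
transform `G`. -/
def dispersiveIntegral (p : E → ℝ) (G : E → ℂ) (q : ℝ × E) : ℂ :=
  ∫ ξ, Complex.exp (Complex.I * ((⟪q.2, ξ⟫ + q.1 * p ξ : ℝ) : ℂ)) * G ξ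

variable {p : E → ℝ} {G G₁ G₂ : E → ℂ}

theorem integrable_dispersiveIntegrand (hp : Measurable p) (hG : Integrable G) (q : ℝ × E) :
    Integrable fun ξ => Complex.exp (Complex.I * ((⟪q.2, ξ⟫ + q.1 * p ξ : ℝ) : ℂ)) * G ξ :=
  integrable_exp_I_mul (by fun_prop) hG

theorem continuous_dispersiveIntegral (hp : Measurable p) (hG : Integrable G) :
    Continuous (dispersiveIntegral p G) :=
  continuous_of_dominated (fun q => (integrable_dispersiveIntegrand hp hG q).1)
    (fun q => .of_forall fun ξ => by rw [norm_mul, Complex.norm_exp_I_mul_ofReal, one_mul])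
    hG.norm (.of_forall fun ξ => by fun_prop)

theorem dispersiveIntegral_add (hp : Measurable p) (hG₁ : Integrable G₁) (hG₂ : Integrable G₂)
    (q : ℝ × E) :
    dispersiveIntegral p (G₁ + G₂) q = dispersiveIntegral p G₁ q + dispersiveIntegral p G₂ q := by
  simp only [dispersiveIntegral, Pi.add_apply, mul_add]
  exact integral_add (integrable_dispersiveIntegrand hp hG₁ q)
    (integrable_dispersiveIntegrand hp hG₂ q)

variable {S : Set E} {v : E} {p' : E → E →L[ℝ] ℝ}

theorem dispersiveIntegral_exchange (hGS : ∀ᵐ ξ, ξ ∉ S → G ξ = 0) (v : E) (q : ℝ × E) :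
    dispersiveIntegral p G (exchange v q) =
      ∫ ξ in S, Complex.exp (Complex.I * (⟪q.2, straighten v p ξ⟫ : ℝ)) *
        (Complex.exp (Complex.I * ((q.1 * ⟪v, ξ⟫ : ℝ) : ℂ)) * G ξ) := by
  rw [setIntegral_eq_integral_of_ae_compl_eq_zero]
  · simp only [dispersiveIntegral, inner_exchange_add_mul, Complex.ofReal_add, mul_add,
      Complex.exp_add, mul_assoc]
  · filter_upwards [hGS] with ξ hξ hξS
    simp only [hξ hξS, mul_zero]

theorem lintegral_enorm_sq_dispersiveIntegral_exchange_le (hv : ‖v‖ = 1)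
    (hS : MeasurableSet S) (hS' : Convex ℝ S) (hp : ∀ ξ ∈ S, HasFDerivAt p (p' ξ) ξ)
    (hpv : ∀ ξ ∈ S, 0 < p' ξ v) (hG : Integrable G) (hGS : ∀ᵐ ξ, ξ ∉ S → G ξ = 0) (s : ℝ) :
    ∫⁻ y : E, ‖dispersiveIntegral p G (exchange v (s, y))‖ₑ ^ 2 ≤
      ENNReal.ofReal ((2 * π) ^ Module.finrank ℝ E) *
        ∫⁻ ξ in S, ENNReal.ofReal (p' ξ v)⁻¹ * ‖G ξ‖ₑ ^ 2 := by
  have hmod : Integrable fun ξ => Complex.exp (Complex.I * ((s * ⟪v, ξ⟫ : ℝ) : ℂ)) * G ξ :=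
    integrable_exp_I_mul (by fun_prop) hG
  simpa only [dispersiveIntegral_exchange hGS, enorm_mul, Complex.enorm_exp_I_mul_ofReal, one_mul]
    using lintegral_enorm_sq_setIntegral_exp_inner_straighten_le hv hS hS' hp hpv
      hmod.integrableOn

theorem lintegral_weight_mul_enorm_sq_dispersiveIntegral_le (hv : ‖v‖ = 1)
    (hS : MeasurableSet S) (hS' : Convex ℝ S) (hpm : Measurable p)
    (hp : ∀ ξ ∈ S, HasFDerivAt p (p' ξ) ξ) (hpv : ∀ ξ ∈ S, 0 < p' ξ v)
    (hG : Integrable G) (hGS : ∀ᵐ ξ, ξ ∉ S → G ξ = 0) {W : ℝ → ℝ≥0∞} (hW : Measurable W) :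
    ∫⁻ q : ℝ × E, W ⟪v, q.2⟫ * ‖dispersiveIntegral p G q‖ₑ ^ 2 ≤
      (∫⁻ s, W s) * (ENNReal.ofReal ((2 * π) ^ Module.finrank ℝ E) *
        ∫⁻ ξ in S, ENNReal.ofReal (p' ξ v)⁻¹ * ‖G ξ‖ₑ ^ 2) := by
  have hD := (continuous_dispersiveIntegral hpm hG).measurable
  have hexchange := (measurePreserving_exchange hv).measurable
  calc ∫⁻ q : ℝ × E, W ⟪v, q.2⟫ * ‖dispersiveIntegral p G q‖ₑ ^ 2
      = ∫⁻ q : ℝ × E, W q.1 * ‖dispersiveIntegral p G (exchange v q)‖ₑ ^ 2 := by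
        simpa only [inner_exchange_snd hv] using
          ((measurePreserving_exchange hv).lintegral_comp
            (f := fun q => W ⟪v, q.2⟫ * ‖dispersiveIntegral p G q‖ₑ ^ 2) (by fun_prop)).symm
    _ = ∫⁻ s, W s * ∫⁻ y, ‖dispersiveIntegral p G (exchange v (s, y))‖ₑ ^ 2 := by
        rw [Measure.volume_eq_prod, lintegral_prod _ (by fun_prop)]
        exact lintegral_congr fun s => lintegral_const_mul (W s) (by fun_prop)
    _ ≤ ∫⁻ s, W s * _ := lintegral_mono fun s => mul_le_mul_right
        (lintegral_enorm_sq_dispersiveIntegral_exchange_le hv hS hS' hp hpv hG hGS s) _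
    _ = _ := lintegral_mul_const _ hW

end DispersiveIntegral

section SmoothingBoundOn

open scoped ENNReal

variable {E : Type*} [NormedAddCommGroup E] [InnerProductSpace ℝ E] [FiniteDimensional ℝ E]
  [MeasurableSpace E] [BorelSpace E]

/-- The weighted space-time estimate for `dispersiveIntegral p G` with spatial weight `w` and
frequency weight `ρ`, uniformly in the densities `G` supported in the frequency set `S`. -/
def SmoothingBoundOn (p : E → ℝ) (w ρ : E → ℝ≥0∞) (S : Set E) : Prop :=
  ∃ K ≠ ⊤, ∀ G : E → ℂ, Integrable G → (∀ᵐ ξ, ξ ∉ S → G ξ = 0) →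
    ∫⁻ q : ℝ × E, w q.2 * ‖dispersiveIntegral p G q‖ₑ ^ 2 ≤ K * ∫⁻ ξ, ρ ξ * ‖G ξ‖ₑ ^ 2

variable {p : E → ℝ} {w ρ : E → ℝ≥0∞} {S T : Set E}

theorem smoothingBoundOn_empty : SmoothingBoundOn p w ρ ∅ := by
  refine ⟨0, ENNReal.zero_ne_top, fun G _ hG => ?_⟩
  have hD (q : ℝ × E) : dispersiveIntegral p G q = 0 := by
    refine integral_eq_zero_of_ae ?_
    filter_upwards [hG] with ξ hξ
    simp [hξ]
  simp [hD]

theorem SmoothingBoundOn.mono (h : SmoothingBoundOn p w ρ T) (hST : S ⊆ T) :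
    SmoothingBoundOn p w ρ S := by
  obtain ⟨K, hK, h⟩ := h
  exact ⟨K, hK, fun G hG hGS => h G hG (hGS.mono fun ξ hξ hξT => hξ fun hξS => hξT (hST hξS))⟩

theorem SmoothingBoundOn.union (hp : Measurable p) (hw : Measurable w) (hS : MeasurableSet S)
    (h₁ : SmoothingBoundOn p w ρ S) (h₂ : SmoothingBoundOn p w ρ T) :
    SmoothingBoundOn p w ρ (S ∪ T) := by
  obtain ⟨K₁, hK₁, h₁⟩ := h₁
  obtain ⟨K₂, hK₂, h₂⟩ := h₂
  refine ⟨2 * (K₁ + K₂), by finiteness, fun G hG hGST => ?_⟩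
  have hG₁ : Integrable (S.indicator G) := hG.indicator hS
  have hG₂ : Integrable (Sᶜ.indicator G) := hG.indicator hS.compl
  have hbound₁ := h₁ _ hG₁ (.of_forall fun ξ hξ => Set.indicator_of_notMem hξ G)
  have hbound₂ := h₂ _ hG₂ (hGST.mono fun ξ hξ hξT => by
    by_cases hξS : ξ ∈ S <;> simp_all)
  have hsplit (q : ℝ × E) : dispersiveIntegral p G q =
      dispersiveIntegral p (S.indicator G) q + dispersiveIntegral p (Sᶜ.indicator G) q := by
    rw [← dispersiveIntegral_add hp hG₁ hG₂, Set.indicator_self_add_compl]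
  have hρ (R : Set E) : ∫⁻ ξ, ρ ξ * ‖R.indicator G ξ‖ₑ ^ 2 ≤ ∫⁻ ξ, ρ ξ * ‖G ξ‖ₑ ^ 2 :=
    lintegral_mono fun ξ => by gcongr; exact enorm_indicator_le_enorm_self G ξ
  have hD := (continuous_dispersiveIntegral hp hG₁).measurable
  calc ∫⁻ q : ℝ × E, w q.2 * ‖dispersiveIntegral p G q‖ₑ ^ 2
      ≤ ∫⁻ q : ℝ × E, 2 * (w q.2 * ‖dispersiveIntegral p (S.indicator G) q‖ₑ ^ 2 +
          w q.2 * ‖dispersiveIntegral p (Sᶜ.indicator G) q‖ₑ ^ 2) :=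
        lintegral_mono fun q => by
          rw [hsplit, ← mul_add, mul_left_comm]
          exact mul_le_mul_right (enorm_add_sq_le _ _) _
    _ = 2 * ((∫⁻ q : ℝ × E, w q.2 * ‖dispersiveIntegral p (S.indicator G) q‖ₑ ^ 2) +
          ∫⁻ q : ℝ × E, w q.2 * ‖dispersiveIntegral p (Sᶜ.indicator G) q‖ₑ ^ 2) := by
        rw [lintegral_const_mul' _ _ ENNReal.ofNat_ne_top, lintegral_add_left (by fun_prop)]
    _ ≤ 2 * (K₁ * (∫⁻ ξ, ρ ξ * ‖G ξ‖ₑ ^ 2) + K₂ * ∫⁻ ξ, ρ ξ * ‖G ξ‖ₑ ^ 2) := by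
        gcongr
        · exact hbound₁.trans (mul_le_mul_right (hρ S) K₁)
        · exact hbound₂.trans (mul_le_mul_right (hρ Sᶜ) K₂)
    _ = 2 * (K₁ + K₂) * ∫⁻ ξ, ρ ξ * ‖G ξ‖ₑ ^ 2 := by ring

theorem smoothingBoundOn_biUnion {ι : Type*} (hp : Measurable p) (hw : Measurable w)
    {Γ : ι → Set E} (s : Finset ι) (hΓ : ∀ i ∈ s, MeasurableSet (Γ i))
    (h : ∀ i ∈ s, SmoothingBoundOn p w ρ (Γ i)) : SmoothingBoundOn p w ρ (⋃ i ∈ s, Γ i) := by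
  classical
  induction s using Finset.induction_on with
  | empty => simpa using smoothingBoundOn_empty
  | insert i s _ ih =>
    rw [Finset.set_biUnion_insert]
    simp only [Finset.forall_mem_insert] at hΓ h
    exact .union hp hw hΓ.1 h.1 (ih hΓ.2 h.2)

theorem smoothingBoundOn_of_convex {v : E} (hv : ‖v‖ = 1) (hS : MeasurableSet S)
    (hS' : Convex ℝ S) (hpm : Measurable p) {p' : E → E →L[ℝ] ℝ}
    (hp : ∀ ξ ∈ S, HasFDerivAt p (p' ξ) ξ) (hpv : ∀ ξ ∈ S, 0 < p' ξ v) {C : ℝ≥0∞} (hC : C ≠ ⊤)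
    (hρ : ∀ ξ ∈ S, ENNReal.ofReal (p' ξ v)⁻¹ ≤ C * ρ ξ) {W : ℝ → ℝ≥0∞} (hW : Measurable W)
    (hW' : ∫⁻ s, W s ≠ ⊤) (hwW : ∀ x, w x ≤ W ⟪v, x⟫) : SmoothingBoundOn p w ρ S := by
  refine ⟨(∫⁻ s, W s) * (ENNReal.ofReal ((2 * π) ^ Module.finrank ℝ E) * C), by finiteness,
    fun G hG hGS => ?_⟩
  have hdensity : ∫⁻ ξ in S, ENNReal.ofReal (p' ξ v)⁻¹ * ‖G ξ‖ₑ ^ 2 ≤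
      C * ∫⁻ ξ, ρ ξ * ‖G ξ‖ₑ ^ 2 := by
    rw [← lintegral_const_mul' _ _ hC]
    refine (setLIntegral_mono' hS fun ξ hξ => ?_).trans (setLIntegral_le_lintegral S _)
    rw [← mul_assoc]
    exact mul_le_mul_left (hρ ξ hξ) _
  calc ∫⁻ q : ℝ × E, w q.2 * ‖dispersiveIntegral p G q‖ₑ ^ 2
      ≤ ∫⁻ q : ℝ × E, W ⟪v, q.2⟫ * ‖dispersiveIntegral p G q‖ₑ ^ 2 :=
        lintegral_mono fun q => mul_le_mul_left (hwW q.2) _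
    _ ≤ _ := lintegral_weight_mul_enorm_sq_dispersiveIntegral_le hv hS hS' hpm hp hpv hG hGS hW
    _ ≤ _ := mul_le_mul_right (mul_le_mul_right hdensity _) _
    _ = _ := by ring

end SmoothingBoundOn

section Homogeneous

open Topology

variable {E F : Type*} [NormedAddCommGroup E] [NormedSpace ℝ E] [NormedAddCommGroup F]
  [NormedSpace ℝ F] {f : E → F} {k : ℝ} {ξ : E}

/-- Positive homogeneity of degree `k` away from the origin; the value at the origin is
unconstrained, as it must be for `k ≤ 0`. -/
def IsPositivelyHomogeneous (k : ℝ) (f : E → F) : Prop :=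
  ∀ t : ℝ, 0 < t → ∀ ξ ≠ 0, f (t • ξ) = t ^ k • f ξ

theorem IsPositivelyHomogeneous.rpow_const {a : E → ℝ} (ha : IsPositivelyHomogeneous k a)
    (ha_nonneg : ∀ ξ ≠ 0, 0 ≤ a ξ) (m : ℝ) :
    IsPositivelyHomogeneous (k * m) fun ξ => a ξ ^ m := fun t ht ξ hξ => by
  simp only [ha t ht ξ hξ, smul_eq_mul]
  rw [Real.mul_rpow (by positivity) (ha_nonneg ξ hξ), Real.rpow_mul ht.le]

protected theorem IsPositivelyHomogeneous.fderiv (hf : IsPositivelyHomogeneous k f) :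
    IsPositivelyHomogeneous (k - 1) (fderiv ℝ f) := fun t ht ξ hξ => by
  have hscale : (fun ζ => f (t • ζ)) =ᶠ[𝓝 ξ] t ^ k • f :=
    (isOpen_ne.eventually_mem hξ).mono fun ζ hζ => hf t ht ζ hζ
  have hderiv : t • fderiv ℝ f (t • ξ) = t ^ k • fderiv ℝ f ξ := by
    rw [← fderiv_comp_smul, hscale.fderiv_eq, fderiv_const_smul_field, Pi.smul_apply]
  rw [Real.rpow_sub_one ht.ne', div_eq_inv_mul, mul_smul, ← hderiv, inv_smul_smul₀ ht.ne']

theorem IsPositivelyHomogeneous.fderiv_apply_self (hf : IsPositivelyHomogeneous k f)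
    (hd : DifferentiableAt ℝ f ξ) (hξ : ξ ≠ 0) : fderiv ℝ f ξ ξ = k • f ξ := by
  have hray : HasDerivAt (fun t : ℝ => t • ξ) ξ 1 := by
    simpa using (hasDerivAt_id (1 : ℝ)).smul_const ξ
  have hcomp : HasDerivAt (fun t : ℝ => f (t • ξ)) (fderiv ℝ f ξ ξ) 1 :=
    HasFDerivAt.comp_hasDerivAt 1 (by simpa using hd.hasFDerivAt) hray
  have hpow : HasDerivAt (fun t : ℝ => t ^ k • f ξ) (k • f ξ) 1 := by
    simpa using (Real.hasDerivAt_rpow_const (p := k) (.inl one_ne_zero)).smul_const (f ξ)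
  refine hcomp.unique (hpow.congr_of_eventuallyEq ?_)
  filter_upwards [lt_mem_nhds zero_lt_one] with t ht using hf t ht ξ hξ

/-- Homogeneous symbols `p` of degree `m` which are dispersive: the group velocity `∇p` of the
equation `∂ₜu = i p(Dₓ) u` vanishes at no nonzero frequency. -/
structure IsDispersiveSymbol (m : ℝ) (p : E → ℝ) : Prop where
  contDiffOn : ContDiffOn ℝ 1 p {0}ᶜ
  homogeneous : IsPositivelyHomogeneous m p
  fderiv_ne_zero : ∀ ξ ≠ 0, fderiv ℝ p ξ ≠ 0

theorem IsDispersiveSymbol.differentiableAt {m : ℝ} {p : E → ℝ} (hp : IsDispersiveSymbol m p)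
    (hξ : ξ ≠ 0) : DifferentiableAt ℝ p ξ :=
  (hp.contDiffOn.contDiffAt (isOpen_compl_singleton.mem_nhds hξ)).differentiableAt one_ne_zero

theorem IsDispersiveSymbol.measurable [MeasurableSpace E] [BorelSpace E] {m : ℝ} {p : E → ℝ}
    (hp : IsDispersiveSymbol m p) : Measurable p :=
  measurable_of_continuousOn_compl_singleton 0 hp.contDiffOn.continuousOn

theorem IsPositivelyHomogeneous.isDispersiveSymbol {m : ℝ} {p : E → ℝ}
    (hp : IsPositivelyHomogeneous m p) (hm : m ≠ 0) (hp_smooth : ContDiffOn ℝ 1 p {0}ᶜ)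
    (hp_ne : ∀ ξ ≠ 0, p ξ ≠ 0) : IsDispersiveSymbol m p where
  contDiffOn := hp_smooth
  homogeneous := hp
  fderiv_ne_zero ξ hξ hzero := by
    have hd := (hp_smooth.contDiffAt (isOpen_compl_singleton.mem_nhds hξ)).differentiableAt
      one_ne_zero
    have hEuler := hp.fderiv_apply_self hd hξ
    rw [hzero, zero_apply] at hEuler
    exact smul_ne_zero hm (hp_ne ξ hξ) hEuler.symm

theorem IsPositivelyHomogeneous.isDispersiveSymbol_rpow {a : E → ℝ}
    (ha : IsPositivelyHomogeneous k a) (hk : k ≠ 0) (ha_smooth : ContDiffOn ℝ 1 a {0}ᶜ)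
    (ha_pos : ∀ ξ ≠ 0, 0 < a ξ) {m : ℝ} (hm : m ≠ 0) :
    IsDispersiveSymbol (k * m) fun ξ => a ξ ^ m :=
  (ha.rpow_const (fun ξ hξ => (ha_pos ξ hξ).le) m).isDispersiveSymbol (mul_ne_zero hk hm)
    (ha_smooth.rpow_const_of_ne fun ξ hξ => (ha_pos ξ hξ).ne')
    fun ξ hξ => (Real.rpow_pos_of_pos (ha_pos ξ hξ) m).ne'

end Homogeneous

section Cones

open Topology
open scoped ENNReal Pointwise

theorem exists_isOpen_convexCone_of_eventually {E : Type*} [NormedAddCommGroup E]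
    [NormedSpace ℝ E] {P : E → Prop} {e : E} (hP : ∀ᶠ ξ in 𝓝 e, P ξ)
    (hsmul : ∀ r : ℝ, 0 < r → ∀ ξ, P ξ → P (r • ξ)) :
    ∃ Γ : ConvexCone ℝ E, IsOpen (Γ : Set E) ∧ e ∈ Γ ∧ ∀ ξ ∈ Γ, P ξ := by
  obtain ⟨ε, hε, hball⟩ := Metric.eventually_nhds_iff_ball.1 hP
  have hmem (ξ : E) : ξ ∈ ConvexCone.hull ℝ (Metric.ball e ε) ↔
      ∃ r : ℝ, 0 < r ∧ ξ ∈ r • Metric.ball e ε :=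
    ConvexCone.mem_hull_of_convex (convex_ball e ε)
  refine ⟨ConvexCone.hull ℝ (Metric.ball e ε), ?_,
    ConvexCone.subset_hull (Metric.mem_ball_self hε), fun ξ hξ => ?_⟩
  · have hUnion : (ConvexCone.hull ℝ (Metric.ball e ε) : Set E) =
        ⋃ (r : ℝ) (_ : 0 < r), r • Metric.ball e ε := by
      ext ξ
      simpa using hmem ξ
    rw [hUnion]
    exact isOpen_iUnion fun r => isOpen_iUnion fun (hr : 0 < r) =>
      Metric.isOpen_ball.smul₀ hr.ne'
  · obtain ⟨r, hr, η, hη, rfl⟩ := (hmem ξ).1 hξ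
    exact hsmul r hr η (hball η hη)

theorem exists_norm_eq_one_apply_pos {E : Type*} [NormedAddCommGroup E] [NormedSpace ℝ E]
    {f : E →L[ℝ] ℝ} (hf : f ≠ 0) : ∃ v, ‖v‖ = 1 ∧ 0 < f v := by
  obtain ⟨w, hw⟩ : ∃ w, f w ≠ 0 := by simpa [DFunLike.ext_iff] using hf
  have hw' : 0 < ‖f w • w‖ := norm_pos_iff.2 (smul_ne_zero hw fun h => hw (by simp [h]))
  refine ⟨‖f w • w‖⁻¹ • f w • w, norm_smul_inv_norm (𝕜 := ℝ) (norm_pos_iff.1 hw'), ?_⟩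
  simp only [map_smul, smul_eq_mul]
  have := mul_self_pos.2 hw
  positivity

theorem IsDispersiveSymbol.exists_convexCone_fderiv_ge {E : Type*} [NormedAddCommGroup E]
    [NormedSpace ℝ E] {m : ℝ} {p : E → ℝ} (hp : IsDispersiveSymbol m p) {e : E} (he : e ≠ 0) :
    ∃ Γ : ConvexCone ℝ E, IsOpen (Γ : Set E) ∧ e ∈ Γ ∧ ∃ v, ‖v‖ = 1 ∧ ∃ c > 0,
      ∀ ξ ∈ Γ, ξ ≠ 0 ∧ c * ‖ξ‖ ^ (m - 1) < fderiv ℝ p ξ v := by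
  obtain ⟨v, hv, hev⟩ := exists_norm_eq_one_apply_pos (hp.fderiv_ne_zero e he)
  have hpos : 0 < ‖e‖ ^ (m - 1) := Real.rpow_pos_of_pos (norm_pos_iff.2 he) _
  obtain ⟨c, hc, hce⟩ := exists_between (div_pos hev hpos)
  have hcont : ContinuousAt (fun ξ => fderiv ℝ p ξ v) e :=
    (hp.contDiffOn.continuousOn_fderiv_of_isOpen isOpen_compl_singleton le_rfl).continuousAt
      (isOpen_compl_singleton.mem_nhds he) |>.clm_apply continuousAt_const
  have hcont' : ContinuousAt (fun ξ => c * ‖ξ‖ ^ (m - 1)) e :=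
    (continuousAt_id.norm.rpow_const (.inl (norm_ne_zero_iff.2 he))).const_mul c
  obtain ⟨Γ, hΓ, heΓ, hbound⟩ := exists_isOpen_convexCone_of_eventually
    (P := fun ξ => ξ ≠ 0 ∧ c * ‖ξ‖ ^ (m - 1) < fderiv ℝ p ξ v)
    ((isOpen_ne.eventually_mem he).and (hcont'.eventually_lt hcont ((lt_div_iff₀ hpos).1 hce)))
    fun r hr ξ ⟨hξ, hlt⟩ => by
      refine ⟨smul_ne_zero hr.ne' hξ, ?_⟩
      rw [hp.homogeneous.fderiv r hr ξ hξ, norm_smul, Real.norm_of_nonneg hr.le,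
        Real.mul_rpow hr.le (norm_nonneg ξ), mul_left_comm]
      exact mul_lt_mul_of_pos_left hlt (Real.rpow_pos_of_pos hr _)
  exact ⟨Γ, hΓ, heΓ, v, hv, c, hc, hbound⟩

theorem exists_finset_compl_zero_subset_biUnion_convexCone {E : Type*} [NormedAddCommGroup E]
    [NormedSpace ℝ E] [FiniteDimensional ℝ E] (Γ : E → ConvexCone ℝ E)
    (hΓ : ∀ e ≠ 0, IsOpen (Γ e : Set E)) (heΓ : ∀ e ≠ 0, e ∈ Γ e) :
    ∃ s : Finset E, (∀ e ∈ s, e ≠ 0) ∧ ({0}ᶜ : Set E) ⊆ ⋃ e ∈ s, (Γ e : Set E) := by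
  have hsphere (e : E) (he : e ∈ Metric.sphere (0 : E) 1) : e ≠ 0 :=
    ne_zero_of_mem_unit_sphere ⟨e, he⟩
  obtain ⟨s, hs, hcover⟩ := (isCompact_sphere (0 : E) 1).elim_nhds_subcover
    (fun e => (Γ e : Set E)) fun e he =>
      (hΓ e (hsphere e he)).mem_nhds (heΓ e (hsphere e he))
  refine ⟨s, fun e he => hsphere e (hs e he), fun ξ hξ => ?_⟩
  have hξ' : 0 < ‖ξ‖ := norm_pos_iff.2 hξ
  have hunit : ‖ξ‖⁻¹ • ξ ∈ Metric.sphere (0 : E) 1 := by simp [norm_smul, hξ'.ne']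
  obtain ⟨e, he, hmem⟩ := Set.mem_iUnion₂.1 (hcover hunit)
  have hsmul := (Γ e).smul_mem hξ' hmem
  rw [smul_inv_smul₀ hξ'.ne'] at hsmul
  exact Set.mem_iUnion₂.2 ⟨e, he, hsmul⟩

variable {E : Type*} [NormedAddCommGroup E] [InnerProductSpace ℝ E] [FiniteDimensional ℝ E]
  [MeasurableSpace E] [BorelSpace E] {m : ℝ} {p : E → ℝ} {w : E → ℝ≥0∞} {W : ℝ → ℝ≥0∞}

theorem IsDispersiveSymbol.exists_convexCone_smoothingBoundOn (hp : IsDispersiveSymbol m p)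
    (hW : Measurable W) (hW' : ∫⁻ s, W s ≠ ⊤) (hwW : ∀ v : E, ‖v‖ = 1 → ∀ x, w x ≤ W ⟪v, x⟫)
    {e : E} (he : e ≠ 0) :
    ∃ Γ : ConvexCone ℝ E, IsOpen (Γ : Set E) ∧ e ∈ Γ ∧
      SmoothingBoundOn p w (fun ξ => ENNReal.ofReal (‖ξ‖ ^ (1 - m))) Γ := by
  obtain ⟨Γ, hΓ, heΓ, v, hv, c, hc, hbound⟩ := hp.exists_convexCone_fderiv_ge he
  have hpos (ξ : E) (hξ : ξ ∈ Γ) : 0 < c * ‖ξ‖ ^ (m - 1) :=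
    mul_pos hc (Real.rpow_pos_of_pos (norm_pos_iff.2 (hbound ξ hξ).1) _)
  refine ⟨Γ, hΓ, heΓ, smoothingBoundOn_of_convex hv hΓ.measurableSet Γ.convex hp.measurable
    (fun ξ hξ => (hp.differentiableAt (hbound ξ hξ).1).hasFDerivAt)
    (fun ξ hξ => (hpos ξ hξ).trans (hbound ξ hξ).2) (C := ENNReal.ofReal c⁻¹)
    ENNReal.ofReal_ne_top (fun ξ hξ => ?_) hW hW' (hwW v hv)⟩
  rw [← ENNReal.ofReal_mul (inv_nonneg.2 hc.le)]
  refine ENNReal.ofReal_le_ofReal ?_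
  calc (fderiv ℝ p ξ v)⁻¹ ≤ (c * ‖ξ‖ ^ (m - 1))⁻¹ :=
        inv_anti₀ (hpos ξ hξ) (hbound ξ hξ).2.le
    _ = c⁻¹ * ‖ξ‖ ^ (1 - m) := by
        rw [mul_inv, ← Real.rpow_neg (norm_nonneg ξ), neg_sub]

theorem IsDispersiveSymbol.smoothingBoundOn_compl_zero (hp : IsDispersiveSymbol m p)
    (hw : Measurable w) (hW : Measurable W) (hW' : ∫⁻ s, W s ≠ ⊤)
    (hwW : ∀ v : E, ‖v‖ = 1 → ∀ x, w x ≤ W ⟪v, x⟫) :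
    SmoothingBoundOn p w (fun ξ => ENNReal.ofReal (‖ξ‖ ^ (1 - m))) {0}ᶜ := by
  choose! Γ hΓ heΓ hbound using fun (e : E) (he : e ≠ 0) =>
    hp.exists_convexCone_smoothingBoundOn hW hW' hwW he
  obtain ⟨s, hs, hcover⟩ := exists_finset_compl_zero_subset_biUnion_convexCone Γ hΓ heΓ
  exact (smoothingBoundOn_biUnion hp.measurable hw s
    (fun e he => (hΓ e (hs e he)).measurableSet) fun e he => hbound e (hs e he)).mono hcover

end Cones

section Weight

open scoped ENNReal

/-- The square `⟨x⟩ ^ (-2δ)` of the Japanese bracket weight `⟨x⟩ ^ (-δ)`. -/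
def bracketWeight {E : Type*} [NormedAddCommGroup E] (δ : ℝ) (x : E) : ℝ≥0∞ :=
  ENNReal.ofReal ((1 + ‖x‖ ^ 2) ^ (-δ))

theorem measurable_bracketWeight {E : Type*} [NormedAddCommGroup E] [MeasurableSpace E]
    [BorelSpace E] (δ : ℝ) : Measurable (bracketWeight δ : E → ℝ≥0∞) := by
  unfold bracketWeight
  fun_prop

theorem enorm_sqrt_rpow_neg_sq {E : Type*} [NormedAddCommGroup E] (δ : ℝ) (x : E) :
    ‖((Real.sqrt (1 + ‖x‖ ^ 2) ^ (-δ) : ℝ) : ℂ)‖ₑ ^ 2 = bracketWeight δ x := by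
  rw [← ofReal_norm, Complex.norm_real, Real.norm_of_nonneg (by positivity),
    ← ENNReal.ofReal_pow (by positivity), bracketWeight, ← Real.rpow_natCast,
    ← Real.rpow_mul (by positivity), mul_comm, Real.rpow_mul (by positivity), Real.rpow_natCast,
    Real.sq_sqrt (by positivity)]

theorem bracketWeight_le_inner {E : Type*} [NormedAddCommGroup E] [InnerProductSpace ℝ E]
    {δ : ℝ} (hδ : 0 ≤ δ) {v : E} (hv : ‖v‖ = 1) (x : E) :
    bracketWeight δ x ≤ bracketWeight δ (⟪v, x⟫ : ℝ) := by
  have hinner : ‖(⟪v, x⟫ : ℝ)‖ ≤ ‖x‖ := by simpa [hv] using norm_inner_le_norm (𝕜 := ℝ) v x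
  refine ENNReal.ofReal_le_ofReal
    (Real.rpow_le_rpow_of_nonpos (by positivity) ?_ (neg_nonpos.2 hδ))
  gcongr

theorem lintegral_bracketWeight_real_ne_top {δ : ℝ} (hδ : 1 / 2 < δ) :
    ∫⁻ s : ℝ, bracketWeight δ s ≠ ⊤ := by
  have h := (integrable_rpow_neg_one_add_norm_sq (E := ℝ) (μ := volume) (r := 2 * δ)
    (by simpa using (div_lt_iff₀' two_pos).1 hδ)).lintegral_lt_top
  simp only [neg_div, mul_div_cancel_left₀ δ (two_ne_zero (α := ℝ))] at h
  exact h.ne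

end Weight

section Amplitude

open scoped ENNReal

theorem ofReal_rpow_one_sub_mul_enorm_rpow_sq_le {r : ℝ} (hr : 0 ≤ r) (m : ℝ) :
    ENNReal.ofReal (r ^ (1 - m)) * ‖((r ^ ((m - 1) / 2) : ℝ) : ℂ)‖ₑ ^ 2 ≤ 1 := by
  rw [← ofReal_norm, Complex.norm_real, Real.norm_of_nonneg (by positivity),
    ← ENNReal.ofReal_pow (by positivity), ← ENNReal.ofReal_mul (by positivity),
    ← Real.rpow_mul_natCast hr, Nat.cast_ofNat, div_mul_cancel₀ _ two_ne_zero, ← neg_sub m 1,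
    Real.rpow_neg hr]
  exact ENNReal.ofReal_le_one.2 inv_mul_le_one

variable {E : Type*} [NormedAddCommGroup E] [InnerProductSpace ℝ E] [FiniteDimensional ℝ E]
  [MeasurableSpace E] [BorelSpace E] [Nontrivial E]

theorem IsDispersiveSymbol.exists_lintegral_bracketWeight_le {m : ℝ} {p : E → ℝ}
    (hp : IsDispersiveSymbol m p) {δ : ℝ} (hδ : 1 / 2 < δ) :
    ∃ K ≠ ⊤, ∀ F : E → ℂ, Integrable (fun ξ => ((‖ξ‖ ^ ((m - 1) / 2) : ℝ) : ℂ) * F ξ) →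
      ∫⁻ q : ℝ × E, bracketWeight δ q.2 *
        ‖dispersiveIntegral p (fun ξ => ((‖ξ‖ ^ ((m - 1) / 2) : ℝ) : ℂ) * F ξ) q‖ₑ ^ 2
          ≤ K * ∫⁻ ξ, ‖F ξ‖ₑ ^ 2 := by
  obtain ⟨K, hK, hbound⟩ := hp.smoothingBoundOn_compl_zero
    (measurable_bracketWeight δ) (measurable_bracketWeight δ)
    (lintegral_bracketWeight_real_ne_top hδ)
    fun v hv => bracketWeight_le_inner (one_half_pos.trans hδ).le hv
  refine ⟨K, hK, fun F hF => (hbound _ hF ?_).trans ?_⟩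
  · filter_upwards [Measure.ae_ne volume (0 : E)] with ξ hξ hξ'
    exact absurd hξ hξ'
  · refine mul_le_mul_right (lintegral_mono fun ξ => ?_) K
    rw [enorm_mul, mul_pow, ← mul_assoc]
    exact mul_le_of_le_one_left' (ofReal_rpow_one_sub_mul_enorm_rpow_sq_le (norm_nonneg ξ) m)

end Amplitude

section Schwartz

open FourierTransform
open scoped ENNReal SchwartzMap

theorem integrable_norm_rpow_mul_schwartzMap {E : Type*} [NormedAddCommGroup E] [NormedSpace ℝ E]
    [FiniteDimensional ℝ E] [MeasurableSpace E] [BorelSpace E] [Nontrivial E] (μ : Measure E)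
    [μ.IsAddHaarMeasure] (ψ : 𝓢(E, ℂ)) {r : ℝ} (hr : -(Module.finrank ℝ E : ℝ) < r) :
    Integrable (fun ξ => ((‖ξ‖ ^ r : ℝ) : ℂ) * ψ ξ) μ := by
  have hmeas : AEStronglyMeasurable (fun ξ => ((‖ξ‖ ^ r : ℝ) : ℂ) * ψ ξ) μ := by
    have hψ := ψ.continuous.measurable
    exact Measurable.aestronglyMeasurable (by fun_prop)
  have hnorm (ξ : E) : ‖((‖ξ‖ ^ r : ℝ) : ℂ) * ψ ξ‖ = ‖ξ‖ ^ r * ‖ψ ξ‖ := by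
    rw [norm_mul, Complex.norm_real, Real.norm_of_nonneg (by positivity)]
  rw [← integrableOn_univ, ← Set.union_compl_self (Metric.ball (0 : E) 1)]
  refine .union ?_ ?_
  · refine integrableOn_ball_of_norm_le_rpow (α := -r) (C := SchwartzMap.seminorm ℝ 0 0 ψ)
      Module.finrank_pos (neg_lt.1 hr) (.of_forall fun ξ => ?_) hmeas
    rw [hnorm, neg_neg, mul_comm]
    gcongr
    exact ψ.norm_le_seminorm ℝ ξ
  · refine (ψ.integrable_pow_mul μ ⌈r⌉₊).integrableOn.mono' hmeas.restrict ?_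
    refine ae_restrict_of_forall_mem Metric.isOpen_ball.measurableSet.compl fun ξ hξ => ?_
    have hξ' : 1 ≤ ‖ξ‖ := by simpa using hξ
    rw [hnorm, ← Real.rpow_natCast]
    gcongr
    exact Nat.le_ceil r

variable {n : ℕ}

theorem FT_eq_fourier (f : EuclideanSpace ℝ (Fin n) → ℂ) (ξ : EuclideanSpace ℝ (Fin n)) :
    FT n f ξ = ((2 * π) ^ (-(n : ℝ) / 2) : ℝ) • 𝓕 f ((2 * π)⁻¹ • ξ) := by
  rw [FT, ← neg_neg ((2 * π)⁻¹ • ξ), ← smul_neg, ← neg_smul, ← integral_exp_inner_mul_eq_fourier]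
  simp [real_inner_comm]

theorem enorm_two_pi_rpow_neg_half_sq_mul (n : ℕ) :
    ‖((2 * π) ^ (-(n : ℝ) / 2) : ℝ)‖ₑ ^ 2 * ENNReal.ofReal ((2 * π) ^ n) = 1 := by
  rw [Real.enorm_of_nonneg (by positivity), ← ENNReal.ofReal_pow (by positivity),
    ← ENNReal.ofReal_mul (by positivity), ← Real.rpow_mul_natCast two_pi_pos.le, Nat.cast_ofNat,
    div_mul_cancel₀ _ two_ne_zero, ← Real.rpow_natCast, ← Real.rpow_add two_pi_pos,
    neg_add_cancel, Real.rpow_zero, ENNReal.ofReal_one]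

theorem lintegral_enorm_sq_FT_le {f : EuclideanSpace ℝ (Fin n) → ℂ} (hf : Integrable f) :
    ∫⁻ ξ, ‖FT n f ξ‖ₑ ^ 2 ≤ ∫⁻ x, ‖f x‖ₑ ^ 2 := by
  have hscale := lintegral_comp_smul_eq volume (fun η => ‖𝓕 f η‖ₑ ^ 2) (inv_ne_zero two_pi_pos.ne')
  rw [finrank_euclideanSpace_fin, inv_pow, inv_inv, abs_of_pos (by positivity)] at hscale
  simp_rw [FT_eq_fourier, enorm_smul, mul_pow]
  rw [lintegral_const_mul' _ _ (by finiteness), hscale, ← mul_assoc,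
    enorm_two_pi_rpow_neg_half_sq_mul, one_mul]
  exact lintegral_enorm_sq_fourier_le hf

theorem integrable_norm_rpow_mul_FT [NeZero n] {r : ℝ} (hr : -(n : ℝ) < r)
    (φ : 𝓢(EuclideanSpace ℝ (Fin n), ℂ)) :
    Integrable fun ξ => ((‖ξ‖ ^ r : ℝ) : ℂ) * FT n φ ξ := by
  have hφ := integrable_norm_rpow_mul_schwartzMap volume (𝓕 φ) (r := r) (by simpa using hr)
  have h := (hφ.comp_smul (inv_ne_zero two_pi_pos.ne')).const_mul
    ((((2 * π) ^ r : ℝ) : ℂ) * (((2 * π) ^ (-(n : ℝ) / 2) : ℝ) : ℂ))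
  refine h.congr (.of_forall fun ξ => ?_)
  have hnorm : (2 * π) ^ r * ‖(2 * π)⁻¹ • ξ‖ ^ r = ‖ξ‖ ^ r := by
    rw [← Real.mul_rpow two_pi_pos.le (norm_nonneg _), norm_smul, norm_inv,
      Real.norm_of_nonneg two_pi_pos.le, mul_inv_cancel_left₀ two_pi_pos.ne']
  simp only [FT_eq_fourier, SchwartzMap.fourier_coe, Complex.real_smul, ← hnorm]
  push_cast
  ring

end Schwartz

section Multiplier

theorem mult_eq_dispersiveIntegral {n : ℕ} (b p : EuclideanSpace ℝ (Fin n) → ℝ)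
    (f : EuclideanSpace ℝ (Fin n) → ℂ) (q : ℝ × EuclideanSpace ℝ (Fin n)) :
    mult n (fun ξ => (b ξ : ℂ) * Complex.exp (Complex.I * (q.1 : ℂ) * (p ξ : ℂ))) f q.2 =
      ((2 * π) ^ (-(n : ℝ) / 2) : ℝ) • dispersiveIntegral p (fun ξ => (b ξ : ℂ) * FT n f ξ) q := by
  simp only [mult, IFT, dispersiveIntegral]
  congr 2 with ξ
  push_cast
  rw [mul_add, Complex.exp_add]
  ring_nf

theorem exists_pos_le_ofReal_mul_of_sq_le {ι : Type*} {f g : ι → ENNReal} {K : ENNReal}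
    (hK : K ≠ ⊤) (h : ∀ i, f i ^ 2 ≤ K * g i ^ 2) :
    ∃ C > 0, ∀ i, f i ≤ ENNReal.ofReal C * g i := by
  have hle : K ≤ ENNReal.ofReal (K.toReal + 1) ^ 2 := by
    rw [← ENNReal.ofReal_pow (by positivity), ENNReal.le_ofReal_iff_toReal_le hK (by positivity)]
    nlinarith [ENNReal.toReal_nonneg (a := K)]
  refine ⟨K.toReal + 1, by positivity, fun i => ?_⟩
  refine (ENNReal.pow_le_pow_left_iff two_ne_zero).1 ((h i).trans ?_)
  rw [mul_pow]
  gcongr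

theorem smoothing_type_I_homogeneous_general (n : ℕ) [NeZero n] (m : ℝ) (hm : 1 - 2 * n < m)
    (δ : ℝ) (hδ : 1 / 2 < δ) {p : EuclideanSpace ℝ (Fin n) → ℝ} (hp : IsDispersiveSymbol m p) :
    ∃ C > 0, ∀ φ : SchwartzMap (EuclideanSpace ℝ (Fin n)) ℂ,
      eLpNorm (fun tx : ℝ × EuclideanSpace ℝ (Fin n) =>
          ((Real.sqrt (1 + ‖tx.2‖ ^ 2) ^ (-δ) : ℝ) : ℂ) *
            mult n (fun ξ => ((‖ξ‖ ^ ((m - 1) / 2) : ℝ) : ℂ) *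
                Complex.exp (Complex.I * (tx.1 : ℂ) * ((p ξ : ℝ) : ℂ)))
              (fun y => φ y) tx.2) 2 volume
        ≤ ENNReal.ofReal C * eLpNorm (fun x => φ x) 2 volume := by
  obtain ⟨K, hK, hbound⟩ := hp.exists_lintegral_bracketWeight_le hδ
  refine exists_pos_le_ofReal_mul_of_sq_le
    (K := ‖((2 * π) ^ (-(n : ℝ) / 2) : ℝ)‖ₑ ^ 2 * K) (by finiteness) fun φ => ?_
  simp_rw [← lintegral_enorm_sq_eq_eLpNorm_sq,
    mult_eq_dispersiveIntegral (fun ξ => ‖ξ‖ ^ ((m - 1) / 2)), enorm_mul, enorm_smul, mul_pow,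
    enorm_sqrt_rpow_neg_sq, mul_left_comm (bracketWeight δ _)]
  rw [lintegral_const_mul' _ _ (by finiteness), mul_assoc]
  refine mul_le_mul_right ((hbound (FT n φ) ?_).trans ?_) _
  · exact integrable_norm_rpow_mul_FT (by linarith) φ
  · exact mul_le_mul_right (lintegral_enorm_sq_FT_le φ.integrable) K

end Multiplier

theorem smoothing_type_I_homogeneous (n : ℕ) (hn : 2 ≤ n) (m : ℝ) (hm : 1 < m)
    (δ : ℝ) (hδ : 1 / 2 < δ)
    (a : EuclideanSpace ℝ (Fin n) → ℝ)
    (ha_cont : Continuous a)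
    (ha_smooth : ContDiffOn ℝ (⊤ : ℕ∞) a {(0 : EuclideanSpace ℝ (Fin n))}ᶜ)
    (ha_hom : ∀ t : ℝ, 0 < t → ∀ ξ, a (t • ξ) = t * a ξ)
    (ha_pos : ∀ ξ : EuclideanSpace ℝ (Fin n), ξ ≠ 0 → 0 < a ξ) :
    ∃ C > 0, ∀ φ : SchwartzMap (EuclideanSpace ℝ (Fin n)) ℂ,
      eLpNorm (fun tx : ℝ × EuclideanSpace ℝ (Fin n) =>
          ((Real.sqrt (1 + ‖tx.2‖ ^ 2) ^ (-δ) : ℝ) : ℂ) *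
            mult n (fun ξ => ((‖ξ‖ ^ ((m - 1) / 2) : ℝ) : ℂ) *
                Complex.exp (Complex.I * (tx.1 : ℂ) * ((a ξ ^ m : ℝ) : ℂ)))
              (fun y => φ y) tx.2) 2 volume
        ≤ ENNReal.ofReal C * eLpNorm (fun x => φ x) 2 volume := by
  have : NeZero n := ⟨by omega⟩
  have ha : IsPositivelyHomogeneous 1 a := fun t ht ξ _ => by rw [ha_hom t ht, Real.rpow_one]; rfl
  have hp : IsDispersiveSymbol m fun ξ => a ξ ^ m := by
    simpa using ha.isDispersiveSymbol_rpow one_ne_zero (ha_smooth.of_le (mod_cast le_top)) ha_pos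
      (zero_lt_one.trans hm).ne'
  exact smoothing_type_I_homogeneous_general n m (by linarith [n.cast_nonneg (α := ℝ)]) δ hδ hp
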